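/- Let μ be a computable Borel probability measure on ℝ. Then the topological support of μ contains a computable point. -/

import Mathlib

open Filter Topology MeasureTheory

/-- A real number `x` is computable if there is a computable function `f : ℕ → ℚ`
with `|f n - x| < 2^(-n)` for all `n`. -/
def IsComputableReal (x : ℝ) : Prop :=
  ∃ f : ℕ → ℚ, Computable f ∧ ∀ n : ℕ, |(f n : ℝ) - x| < 2 ^ (-(n : ℤ))

/-- A Borel probability measure `μ` on `ℝ` is computable if the measures of finite
unions of open rational intervals are lower-computable reals, uniformly in the list of
intervals: a single computable function outputs rationals, nondecreasing in `m`,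
converging to the measure of the union. -/
def IsComputableMeasureR (μ : Measure ℝ) : Prop :=
  ∃ f : List (ℚ × ℚ) → ℕ → ℚ, Computable₂ f ∧
    ∀ L : List (ℚ × ℚ), Monotone (f L) ∧
      Tendsto (fun m => (f L m : ℝ)) atTop
        (𝓝 (μ (⋃ p ∈ L, Set.Ioo ((p.1 : ℝ)) ((p.2 : ℝ)))).toReal)

/-!
Approximating `μ (a, b)` from below, one recognizes in finite time that it is positive, that is,
that `(a, b)` meets the support of `μ`. Any closed set `K` with this property contains a computable
point: starting from an interval that meets `K`, search for an interval strictly inside it, less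
than half as long, that also meets `K`, and iterate. The search always succeeds, and the intervals
shrink to a computable real which, being a limit of points of `K`, lies in `K`.
-/

open Encodable

section RecursivelyEnumerable

variable {α β : Type*} [Primcodable α] [Primcodable β]

theorem computablePred_and {p q : α → Prop} (hp : ComputablePred p) (hq : ComputablePred q) :
    ComputablePred fun a => p a ∧ q a := by
  classical
  exact ((Primrec.and.to_comp.comp hp.decide hq.decide).of_eq fun a => by simp).computablePred

theorem rePred_and {p q : α → Prop} (hp : REPred p) (hq : REPred q) :
    REPred fun a => p a ∧ q a :=
  (Partrec.bind hp (hq.comp Computable.fst).to₂).of_eq fun a => Part.ext fun u => by simp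

theorem rePred_exists_nat {q : α → ℕ → Prop} (hq : ComputablePred fun p : α × ℕ => q p.1 p.2) :
    REPred fun a => ∃ k, q a k := by
  classical
  refine (Partrec.rfind hq.decide.to₂.partrec₂).dom_re.of_eq fun a => ?_
  simp [Nat.rfind_dom]

theorem exists_computable_stages_of_rePred {p : α → Prop} (hp : REPred p) :
    ∃ f : α → ℕ → Bool, Computable₂ f ∧ ∀ a, p a ↔ ∃ k, f a k := by
  obtain ⟨c, hc⟩ := Nat.Partrec.Code.exists_code.1 hp
  refine ⟨fun a k => (c.evaln k (encode a)).isSome, ?_, fun a => ?_⟩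
  · exact (Primrec.option_isSome.comp (Nat.Partrec.Code.primrec_evaln.comp
      ((Primrec.snd.pair (Primrec.const c)).pair (Primrec.encode.comp Primrec.fst)))).to_comp
  · have hdom : (c.eval (encode a)).Dom ↔ p a := by
      simp [hc, Part.assert]
    simp only [← hdom, Part.dom_iff_mem, Nat.Partrec.Code.evaln_complete, Option.isSome_iff_exists,
      Option.mem_def]
    exact exists_comm

theorem exists_partrec_choice_of_rePred {R : α → β → Prop}
    (hR : REPred fun p : α × β => R p.1 p.2) :
    ∃ f : α →. β, Partrec f ∧ (∀ a, ∀ b ∈ f a, R a b) ∧ ∀ a b, R a b → (f a).Dom := by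
  obtain ⟨stage, hstage, hRstage⟩ := exists_computable_stages_of_rePred hR
  -- `n` codes a candidate value together with the stage at which it is to be accepted.
  let search (a : α) (n : ℕ) : Option β :=
    (decode (α := β × ℕ) n).bind fun w => bif stage (a, w.1) w.2 then some w.1 else none
  have hsearch : Computable₂ search :=
    Computable.option_bind (Computable.decode.comp Computable.snd)
      (Computable.cond
        (hstage.comp ((Computable.fst.comp Computable.fst).pair
          (Computable.fst.comp Computable.snd)) (Computable.snd.comp Computable.snd))
        (Computable.option_some.comp (Computable.fst.comp Computable.snd))
        (Computable.const none)).to₂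
  refine ⟨fun a => Nat.rfindOpt (search a), Partrec.rfindOpt hsearch, fun a b hb => ?_,
    fun a b hab => ?_⟩
  · obtain ⟨n, hn⟩ := Nat.rfindOpt_spec hb
    obtain ⟨w, -, hw⟩ := Option.bind_eq_some_iff.1 hn
    cases hk : stage (a, w.1) w.2 with
    | false => simp [hk] at hw
    | true =>
      obtain rfl : w.1 = b := by simpa [hk] using hw
      exact (hRstage _).2 ⟨_, hk⟩
  · obtain ⟨k, hk⟩ := (hRstage (a, b)).1 hab
    exact Nat.rfindOpt_dom.2 ⟨encode (b, k), b, by simp [search, hk]⟩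

theorem computable_of_rePred_graph {f : α → β} (hf : REPred fun p : α × β => f p.1 = p.2) :
    Computable f := by
  obtain ⟨g, hg, hgf, hdom⟩ := exists_partrec_choice_of_rePred (R := fun a b => f a = b) hf
  refine hg.of_eq_tot fun a => ?_
  obtain ⟨b, hb⟩ := Part.dom_iff_mem.1 (hdom a _ rfl)
  exact hgf a b hb ▸ hb

theorem exists_computable_seq_of_rePred {R : α → α → Prop}
    (hR : REPred fun p : α × α => R p.1 p.2) {a₀ a₁ : α} (h₀ : R a₀ a₁)
    (hstep : ∀ a b, R a b → ∃ c, R b c) :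
    ∃ g : ℕ → α, Computable g ∧ g 0 = a₀ ∧ ∀ n, R (g n) (g (n + 1)) := by
  obtain ⟨f, hf, hfR, hdom⟩ := exists_partrec_choice_of_rePred hR
  have hnext (a : α) (ha : ∃ b, R a b) : ∃ b, b ∈ f a :=
    Part.dom_iff_mem.1 (hdom a _ ha.choose_spec)
  choose! next hnext using hnext
  let g (n : ℕ) : α := Nat.rec a₀ (fun _ a => next a) n
  have hsucc (n : ℕ) : ∃ b, R (g n) b := by
    induction n with
    | zero => exact ⟨a₁, h₀⟩
    | succ n ih => exact hstep _ _ (hfR _ _ (hnext _ ih))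
  refine ⟨g, ?_, rfl, fun n => hfR _ _ (hnext _ (hsucc n))⟩
  refine Partrec.of_eq_tot (Partrec.nat_rec (h := fun _ p => f p.2) Computable.id
    (Computable.const a₀).partrec (hf.comp (Computable.snd.comp Computable.snd)).to₂) fun n => ?_
  induction n with
  | zero => exact Part.mem_some _
  | succ n ih => exact Part.mem_bind_iff.2 ⟨g n, ih, hnext _ (hsucc n)⟩

end RecursivelyEnumerable

section PrimrecInt

theorem primrec_intEquivNatSumNat : Primrec Equiv.intEquivNatSumNat :=
  Primrec.encode_iff.1 <| Primrec.encode.of_eq fun z => by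
    cases z <;> rfl

theorem primrec_intOfNat : Primrec Int.ofNat :=
  Primrec.encode_iff.1 <| (Primrec.encode.comp (Primrec.sumInl (β := ℕ))).of_eq fun _ => rfl

theorem primrec_intNegSucc : Primrec Int.negSucc :=
  Primrec.encode_iff.1 <| (Primrec.encode.comp (Primrec.sumInr (α := ℕ))).of_eq fun _ => rfl

theorem primrec_int_toNat : Primrec Int.toNat :=
  (Primrec.sumCasesOn primrec_intEquivNatSumNat Primrec.snd.to₂ (Primrec.const 0).to₂).of_eq
    fun z => by cases z <;> rfl

theorem primrec_int_toNat_neg : Primrec fun z : ℤ => (-z).toNat :=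
  (Primrec.sumCasesOn primrec_intEquivNatSumNat (Primrec.const 0).to₂
    (Primrec.succ.comp Primrec.snd).to₂).of_eq fun z => by rcases z with (_ | n) | n <;> rfl

theorem primrec_int_natAbs : Primrec Int.natAbs :=
  (Primrec.nat_add.comp primrec_int_toNat primrec_int_toNat_neg).of_eq fun z => by omega

theorem primrec_int_subNatNat : Primrec₂ Int.subNatNat :=
  (Primrec.nat_casesOn (Primrec.nat_sub.comp Primrec.snd Primrec.fst)
    (primrec_intOfNat.comp (Primrec.nat_sub.comp Primrec.fst Primrec.snd))
    (primrec_intNegSucc.comp Primrec.snd).to₂).of_eq fun p => by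
      rw [Int.subNatNat]
      cases p.2 - p.1 <;> rfl

theorem primrec_int_sub : Primrec₂ fun z w : ℤ => z - w :=
  (primrec_int_subNatNat.comp
    (Primrec.nat_add.comp (primrec_int_toNat.comp Primrec.fst)
      (primrec_int_toNat_neg.comp Primrec.snd))
    (Primrec.nat_add.comp (primrec_int_toNat.comp Primrec.snd)
      (primrec_int_toNat_neg.comp Primrec.fst))).of_eq fun p => by
        simp only [Int.subNatNat_eq_coe]
        omega

theorem primrec_int_mul : Primrec₂ fun z w : ℤ => z * w :=
  (primrec_int_subNatNat.comp
    (Primrec.nat_add.comp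
      (Primrec.nat_mul.comp (primrec_int_toNat.comp Primrec.fst)
        (primrec_int_toNat.comp Primrec.snd))
      (Primrec.nat_mul.comp (primrec_int_toNat_neg.comp Primrec.fst)
        (primrec_int_toNat_neg.comp Primrec.snd)))
    (Primrec.nat_add.comp
      (Primrec.nat_mul.comp (primrec_int_toNat.comp Primrec.fst)
        (primrec_int_toNat_neg.comp Primrec.snd))
      (Primrec.nat_mul.comp (primrec_int_toNat_neg.comp Primrec.fst)
        (primrec_int_toNat.comp Primrec.snd)))).of_eq fun ⟨z, w⟩ => by
          calc Int.subNatNat (z.toNat * w.toNat + (-z).toNat * (-w).toNat)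
                (z.toNat * (-w).toNat + (-z).toNat * w.toNat)
            _ = (z.toNat - (-z).toNat) * (w.toNat - (-w).toNat) := by
              rw [Int.subNatNat_eq_coe]
              push_cast
              ring
            _ = z * w := by simp only [Int.toNat_sub_toNat_neg]

theorem primrecRel_int_lt : PrimrecRel fun z w : ℤ => z < w :=
  (Primrec.nat_lt.comp (Primrec.const 0)
    (primrec_int_toNat.comp (primrec_int_sub.comp Primrec.snd Primrec.fst))).of_eq
      fun p => by simp

end PrimrecInt

section DenumerableOfEncodable

theorem computable_subtype_ofNat {s : Set ℕ} [DecidablePred (· ∈ s)] [Infinite s]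
    (hs : ComputablePred fun n => n ∈ s) : Computable fun n => (Nat.Subtype.ofNat s n : ℕ) := by
  have hex (x : ℕ) : ∃ m, x + m + 1 ∈ s := by
    obtain ⟨y, hy, hxy⟩ := (Set.infinite_coe_iff.mp ‹Infinite s›).exists_gt x
    obtain ⟨m, rfl⟩ := Nat.exists_eq_add_of_lt hxy
    exact ⟨m, hy⟩
  have hfind : Computable fun x => Nat.find (hex x) :=
    Computable.find (P := fun x m => x + m + 1 ∈ s)
      (hs.decide.comp (g := fun p : ℕ × ℕ => p.1 + p.2 + 1)
        (Primrec.succ.comp Primrec.nat_add).to_comp).computablePred hex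
  have hnext : Computable fun x => x + Nat.find (hex x) + 1 :=
    Computable.succ.comp (Primrec.nat_add.to_comp.comp Computable.id hfind)
  refine (Computable.nat_rec (h := fun _ p => p.2 + Nat.find (hex p.2) + 1)
    Computable.id (Computable.const ((⊥ : s) : ℕ))
    (hnext.comp (Computable.snd.comp Computable.snd)).to₂).of_eq fun n => ?_
  induction n with
  | zero => rfl
  | succ n ih => exact congrArg (fun x => x + Nat.find (hex x) + 1) ih

theorem computable_encode_ofNat_ofEncodableOfInfinite {α : Type*} [Encodable α] [Infinite α]
    (h : ComputablePred fun n => n ∈ Set.range (encode : α → ℕ)) :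
    Computable fun n =>
      encode (@Denumerable.ofNat α (Denumerable.ofEncodableOfInfinite α) n) := by
  let := decidableRangeEncode α
  have : Infinite (Set.range (encode : α → ℕ)) :=
    (Set.infinite_range_of_injective encode_injective).to_subtype
  let := Nat.Subtype.denumerable (Set.range (encode : α → ℕ))
  refine (computable_subtype_ofNat h).of_eq fun n => ?_
  have hofNat : @Denumerable.ofNat α (Denumerable.ofEncodableOfInfinite α) n =
      (equivRangeEncode α).symm (Nat.Subtype.ofNat (Set.range encode) n) :=
    (Denumerable.ofEquiv_ofNat _ _ _).trans <| congrArg _ <| Denumerable.ofEquiv_ofNat _ _ _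
  rw [hofNat]
  exact (congrArg Subtype.val <| (equivRangeEncode α).apply_symm_apply _).symm

end DenumerableOfEncodable

section ComputableRat

theorem primrecRel_nat_dvd : PrimrecRel fun a b : ℕ => a ∣ b :=
  (Primrec.eq.comp (Primrec.nat_mod.comp Primrec.snd Primrec.fst) (Primrec.const 0)).of_eq
    fun _ => Nat.dvd_iff_mod_eq_zero.symm

theorem coprime_iff_forall_lt_succ {a b : ℕ} (hb : 0 < b) :
    a.Coprime b ↔ ∀ d < b + 1, ¬(d ∣ a ∧ d ∣ b) ∨ d = 1 := by
  simp only [← imp_iff_not_or]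
  refine ⟨fun h d _ hd => Nat.eq_one_of_dvd_coprimes h hd.1 hd.2, fun h => ?_⟩
  exact h (a.gcd b) (Nat.lt_succ_of_le (Nat.gcd_le_right a hb)) (Nat.gcd_dvd a b)

theorem primrecRel_pos_and_coprime : PrimrecRel fun a b : ℕ => 0 < b ∧ a.Coprime b := by
  have hdvd : PrimrecRel fun (d : ℕ) (p : ℕ × ℕ) => ¬(d ∣ p.1 ∧ d ∣ p.2) ∨ d = 1 :=
    ((primrecRel_nat_dvd.comp Primrec.fst (Primrec.fst.comp Primrec.snd)).and
      (primrecRel_nat_dvd.comp Primrec.fst (Primrec.snd.comp Primrec.snd))).not.or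
      (Primrec.eq.comp Primrec.fst (Primrec.const 1))
  have hforall : PrimrecPred fun p : ℕ × ℕ =>
      ∀ d < p.2 + 1, ¬(d ∣ p.1 ∧ d ∣ p.2) ∨ d = 1 :=
    (hdvd.forall_mem_list.comp (Primrec.list_range.comp (Primrec.succ.comp Primrec.snd))
      Primrec.id).of_eq fun p => by simp only [List.mem_range, Nat.succ_eq_add_one, id]
  refine ((Primrec.nat_lt.comp (Primrec.const 0) Primrec.snd).and hforall).of_eq fun p => ?_
  exact and_congr_right fun hb => (coprime_iff_forall_lt_succ hb).symm

theorem rat_encode_eq_pair (q : ℚ) :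
    @encode ℚ Rat.instEncodable q = Nat.pair (encode q.num) q.den := rfl

theorem mem_range_rat_encode_iff (n : ℕ) :
    n ∈ Set.range (@encode ℚ Rat.instEncodable) ↔
      0 < n.unpair.2 ∧ (Denumerable.ofNat ℤ n.unpair.1).natAbs.Coprime n.unpair.2 := by
  constructor
  · rintro ⟨q, rfl⟩
    rw [rat_encode_eq_pair, Nat.unpair_pair, Denumerable.ofNat_encode]
    exact ⟨q.pos, q.reduced⟩
  · rintro ⟨hpos, hcoprime⟩
    refine ⟨⟨Denumerable.ofNat ℤ n.unpair.1, n.unpair.2, hpos.ne', hcoprime⟩, ?_⟩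
    rw [rat_encode_eq_pair, Denumerable.encode_ofNat, Nat.pair_unpair]

-- Two encodings of `ℚ` are in play: computability on `ℚ` refers to the bijective numbering of
-- `Rat.instDenumerable`, whereas `Rat.instEncodable` exposes numerator and denominator.
theorem computable_rat_encode : Computable (@encode ℚ Rat.instEncodable) := by
  have hmem : ComputablePred fun n => n ∈ Set.range (@encode ℚ Rat.instEncodable) :=
    ((primrecRel_pos_and_coprime.comp
      (primrec_int_natAbs.comp ((Primrec.ofNat ℤ).comp (Primrec.fst.comp Primrec.unpair)))
      (Primrec.snd.comp Primrec.unpair)).of_eq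
      fun n => (mem_range_rat_encode_iff n).symm).computablePred
  exact ((computable_encode_ofNat_ofEncodableOfInfinite hmem).comp
    (Computable.encode (α := ℚ))).of_eq fun q => congrArg _ (Denumerable.ofNat_encode q)

theorem computable_rat_num : Computable Rat.num :=
  ((Computable.ofNat ℤ).comp
    (Computable.fst.comp (Computable.unpair.comp computable_rat_encode))).of_eq fun q => by
      rw [rat_encode_eq_pair, Nat.unpair_pair, Denumerable.ofNat_encode]

theorem computable_rat_den : Computable Rat.den :=
  (Computable.snd.comp (Computable.unpair.comp computable_rat_encode)).of_eq fun q => by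
    rw [rat_encode_eq_pair, Nat.unpair_pair]

theorem computable_rat_den_intCast : Computable fun q : ℚ => (q.den : ℤ) :=
  primrec_intOfNat.to_comp.comp computable_rat_den

theorem computablePred_rat_lt : ComputablePred fun p : ℚ × ℚ => p.1 < p.2 := by
  have hmul := primrec_int_mul.to_comp
  exact ((primrecRel_int_lt.decide.to_comp.comp
    (hmul.comp (computable_rat_num.comp Computable.fst)
      (computable_rat_den_intCast.comp Computable.snd))
    (hmul.comp (computable_rat_num.comp Computable.snd)
      (computable_rat_den_intCast.comp Computable.fst))).computablePred).of_eq
        fun p => (Rat.lt_iff p.1 p.2).symm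

theorem rat_sub_eq_iff_int (q r s : ℚ) :
    q - r = s ↔ (q.num * r.den - r.num * q.den) * s.den = s.num * (q.den * r.den) := by
  rw [Rat.sub_def', ← Rat.mkRat_self s,
    Rat.mkRat_eq_iff (mul_ne_zero q.den_nz r.den_nz) s.den_nz, Rat.mkRat_self, Nat.cast_mul]

-- Only the graph of subtraction is tested, by an identity between integers: evaluating the
-- difference directly would require reducing a fraction to lowest terms.
theorem computable_rat_sub : Computable₂ fun q r : ℚ => q - r := by
  have hnum := computable_rat_num
  have hden := computable_rat_den_intCast
  have hmul := primrec_int_mul.to_comp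
  have hsub := primrec_int_sub.to_comp
  have hq : Computable fun p : (ℚ × ℚ) × ℚ => p.1.1 := Computable.fst.comp Computable.fst
  have hr : Computable fun p : (ℚ × ℚ) × ℚ => p.1.2 := Computable.snd.comp Computable.fst
  have hs : Computable fun p : (ℚ × ℚ) × ℚ => p.2 := Computable.snd
  have hgraph := Primrec.eq.decide.to_comp.comp
    (hmul.comp
      (hsub.comp (hmul.comp (hnum.comp hq) (hden.comp hr))
        (hmul.comp (hnum.comp hr) (hden.comp hq)))
      (hden.comp hs))
    (hmul.comp (hnum.comp hs) (hmul.comp (hden.comp hq) (hden.comp hr)))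
  exact computable_of_rePred_graph <| (hgraph.computablePred.of_eq fun p =>
    (rat_sub_eq_iff_int p.1.1 p.1.2 p.2).symm).to_re

end ComputableRat

section ClosedSet

/-- Each pair of rationals stands for the open interval between its entries. `IsHalving s t` is
the relation searched for effectively: the closure of `t` lies in `s`, and `t` is less than half
as long as `s`. -/
def IsHalving (s t : ℚ × ℚ) : Prop :=
  s.1 < t.1 ∧ t.2 < s.2 ∧ 2 * (t.2 - t.1) < s.2 - s.1

theorem computablePred_isHalving :
    ComputablePred fun p : (ℚ × ℚ) × (ℚ × ℚ) => IsHalving p.1 p.2 := by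
  have hs : Computable fun p : (ℚ × ℚ) × (ℚ × ℚ) => p.1 := Computable.fst
  have ht : Computable fun p : (ℚ × ℚ) × (ℚ × ℚ) => p.2 := Computable.snd
  have hlen : Computable fun s : ℚ × ℚ => s.2 - s.1 :=
    computable_rat_sub.comp Computable.snd Computable.fst
  have hlt {f g : (ℚ × ℚ) × (ℚ × ℚ) → ℚ} (hf : Computable f) (hg : Computable g) :
      ComputablePred fun p => f p < g p :=
    (computablePred_rat_lt.decide.comp (hf.pair hg)).computablePred
  refine (computablePred_and (hlt (Computable.fst.comp hs) (Computable.fst.comp ht)) <|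
    computablePred_and (hlt (Computable.snd.comp ht) (Computable.snd.comp hs)) <|
    hlt (hlen.comp ht) (computable_rat_sub.comp (hlen.comp hs) (hlen.comp ht))).of_eq fun p => ?_
  rw [IsHalving, lt_sub_iff_add_lt, two_mul]

theorem exists_rat_mem_Ioo_and_sub_lt {a b x ε : ℝ} (hx : x ∈ Set.Ioo a b) (hε : 0 < ε) :
    ∃ c d : ℚ, a < c ∧ x ∈ Set.Ioo (c : ℝ) d ∧ d < b ∧ (d - c : ℝ) < ε := by
  obtain ⟨c, hc, hcx⟩ := exists_rat_btwn (max_lt hx.1 (sub_lt_self x (half_pos hε)))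
  obtain ⟨d, hxd, hd⟩ := exists_rat_btwn (lt_min hx.2 (lt_add_of_pos_right x (half_pos hε)))
  rw [max_lt_iff] at hc
  rw [lt_min_iff] at hd
  exact ⟨c, d, hc.1, ⟨hcx, hxd⟩, hd.1, by linarith [hc.2, hd.2]⟩

theorem exists_isHalving_mem_Ioo {s : ℚ × ℚ} {x : ℝ} (hx : x ∈ Set.Ioo (s.1 : ℝ) s.2) :
    ∃ t : ℚ × ℚ, IsHalving s t ∧ x ∈ Set.Ioo (t.1 : ℝ) t.2 := by
  obtain ⟨c, d, hc, hxcd, hd, hcd⟩ :=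
    exists_rat_mem_Ioo_and_sub_lt hx (half_pos (sub_pos.2 (hx.1.trans hx.2)))
  refine ⟨(c, d), ⟨mod_cast hc, mod_cast hd, ?_⟩, hxcd⟩
  have hlen : 2 * (d - c : ℝ) < s.2 - s.1 := by linarith
  exact_mod_cast hlen

theorem sub_lt_of_forall_isHalving {g : ℕ → ℚ × ℚ} (h₀ : ((g 0).2 - (g 0).1 : ℝ) < 1)
    (hg : ∀ n, IsHalving (g n) (g (n + 1))) (n : ℕ) :
    ((g n).2 - (g n).1 : ℝ) < 2 ^ (-(n : ℤ)) := by
  induction n with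
  | zero => simpa using h₀
  | succ n ih =>
    have hhalf : (2 * ((g (n + 1)).2 - (g (n + 1)).1) : ℝ) < (g n).2 - (g n).1 :=
      mod_cast (hg n).2.2
    have hpow : (2 : ℝ) * 2 ^ (-((n + 1 : ℕ) : ℤ)) = 2 ^ (-(n : ℤ)) := by
      rw [← zpow_one_add₀ two_ne_zero]
      congr 1
      push_cast
      ring
    linarith

theorem exists_isComputableReal_mem_Icc {c d : ℕ → ℚ} (hc : Computable c) (hmono : Monotone c)
    (hanti : Antitone d) (hcd : ∀ n, c n ≤ d n) (hlen : ∀ n, (d n - c n : ℝ) < 2 ^ (-(n : ℤ))) :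
    ∃ x, IsComputableReal x ∧ ∀ n, x ∈ Set.Icc (c n : ℝ) (d n) := by
  have hx := Set.mem_iInter.1 <| Monotone.ciSup_mem_iInter_Icc_of_antitone
    (f := fun n => (c n : ℝ)) (g := fun n => (d n : ℝ)) (Rat.cast_mono.comp hmono)
    (Rat.cast_mono.comp_antitone hanti) fun n => Rat.cast_le.2 (hcd n)
  refine ⟨_, ⟨c, hc, fun n => ?_⟩, hx⟩
  exact (Real.dist_le_of_mem_Icc (Set.left_mem_Icc.2 (Rat.cast_le.2 (hcd n))) (hx n)).trans_lt
    (hlen n)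

theorem mem_of_isClosed_of_forall_nonempty_inter_Icc {K : Set ℝ} (hK : IsClosed K) {x : ℝ}
    {c d : ℕ → ℝ} (hx : ∀ n, x ∈ Set.Icc (c n) (d n))
    (hne : ∀ n, (K ∩ Set.Icc (c n) (d n)).Nonempty)
    (hlen : Tendsto (fun n => d n - c n) atTop (𝓝 0)) : x ∈ K := by
  choose y hyK hy using hne
  have hyx : Tendsto y atTop (𝓝 x) := tendsto_iff_dist_tendsto_zero.2 <|
    squeeze_zero (fun _ => dist_nonneg) (fun n => Real.dist_le_of_mem_Icc (hy n) (hx n)) hlen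
  exact hK.mem_of_tendsto hyx (Eventually.of_forall hyK)

theorem exists_isComputableReal_mem_of_forall_isHalving {K : Set ℝ} (hK : IsClosed K)
    {g : ℕ → ℚ × ℚ} (hg : Computable g) (h₀ : ((g 0).2 - (g 0).1 : ℝ) < 1)
    (hhalf : ∀ n, IsHalving (g n) (g (n + 1)))
    (hne : ∀ n, (K ∩ Set.Ioo ((g n).1 : ℝ) (g n).2).Nonempty) :
    ∃ x ∈ K, IsComputableReal x := by
  have hlen := sub_lt_of_forall_isHalving h₀ hhalf
  have hle (n : ℕ) : (g n).1 ≤ (g n).2 :=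
    let ⟨_, _, hy⟩ := hne n
    Rat.cast_le.1 (hy.1.trans hy.2).le
  obtain ⟨x, hx, hmem⟩ := exists_isComputableReal_mem_Icc (Computable.fst.comp hg)
    (monotone_nat_of_le_succ fun n => (hhalf n).1.le)
    (antitone_nat_of_succ_le fun n => (hhalf n).2.1.le) hle hlen
  refine ⟨x, mem_of_isClosed_of_forall_nonempty_inter_Icc hK hmem
    (fun n => (hne n).mono (Set.inter_subset_inter_right K Set.Ioo_subset_Icc_self)) ?_, hx⟩
  have hpow : Tendsto (fun n : ℕ => (2 : ℝ) ^ (-(n : ℤ))) atTop (𝓝 0) := by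
    simpa only [zpow_neg, zpow_natCast, inv_pow] using
      tendsto_pow_atTop_nhds_zero_of_lt_one (r := (2⁻¹ : ℝ)) (by norm_num) (by norm_num)
  exact squeeze_zero (fun n => sub_nonneg.2 (Rat.cast_le.2 (hle n)))
    (fun n => (hlen n).le) hpow

theorem exists_isComputableReal_mem_of_rePred {K : Set ℝ} (hK : IsClosed K) (hne : K.Nonempty)
    (hre : REPred fun p : ℚ × ℚ => (K ∩ Set.Ioo (p.1 : ℝ) p.2).Nonempty) :
    ∃ x ∈ K, IsComputableReal x := by
  obtain ⟨x₀, hx₀⟩ := hne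
  obtain ⟨a, b, -, hx₀ab, -, hab⟩ := exists_rat_mem_Ioo_and_sub_lt
    (show x₀ ∈ Set.Ioo (x₀ - 1) (x₀ + 1) by constructor <;> linarith) one_pos
  have hstep {s : ℚ × ℚ} (hs : (K ∩ Set.Ioo (s.1 : ℝ) s.2).Nonempty) :
      ∃ t : ℚ × ℚ, IsHalving s t ∧ (K ∩ Set.Ioo (t.1 : ℝ) t.2).Nonempty :=
    let ⟨y, hyK, hys⟩ := hs
    let ⟨t, hst, hyt⟩ := exists_isHalving_mem_Ioo hys
    ⟨t, hst, y, hyK, hyt⟩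
  have hab_ne : (K ∩ Set.Ioo (a : ℝ) b).Nonempty := ⟨x₀, hx₀, hx₀ab⟩
  obtain ⟨t, ht⟩ := hstep (s := (a, b)) hab_ne
  obtain ⟨g, hg, hg₀, hgR⟩ := exists_computable_seq_of_rePred
    (R := fun s t => IsHalving s t ∧ (K ∩ Set.Ioo (t.1 : ℝ) t.2).Nonempty)
    (rePred_and computablePred_isHalving.to_re (hre.comp Computable.snd)) ht
    fun _ _ h => hstep h.2
  refine exists_isComputableReal_mem_of_forall_isHalving hK hg ?_ (fun n => (hgR n).1) fun n => ?_
  · rwa [hg₀]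
  · cases n with
    | zero => rwa [hg₀]
    | succ n => exact (hgR n).2

end ClosedSet

section Measure

theorem lt_iff_exists_lt_of_monotone_of_tendsto {ι α : Type*} [Preorder ι] [IsDirectedOrder ι]
    [Nonempty ι] [LinearOrder α] [TopologicalSpace α] [OrderClosedTopology α] {u : ι → α} {a l : α}
    (hu : Monotone u) (hl : Tendsto u atTop (𝓝 l)) : a < l ↔ ∃ i, a < u i :=
  ⟨fun h => (hl.eventually_const_lt h).exists, fun ⟨i, hi⟩ => hi.trans_le (hu.ge_of_tendsto hl i)⟩

theorem rePred_measure_Ioo_pos {μ : Measure ℝ} [IsLocallyFiniteMeasure μ]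
    (hμ : IsComputableMeasureR μ) :
    REPred fun p : ℚ × ℚ => 0 < μ (Set.Ioo (p.1 : ℝ) p.2) := by
  obtain ⟨f, hf, hfμ⟩ := hμ
  have hpos : ComputablePred fun p : (ℚ × ℚ) × ℕ => 0 < f [p.1] p.2 :=
    (computablePred_rat_lt.decide.comp ((Computable.const 0).pair
      (hf.comp (Computable.list_cons.comp Computable.fst (Computable.const []))
        Computable.snd))).computablePred
  refine (rePred_exists_nat (q := fun p m => 0 < f [p] m) hpos).of_eq fun p => ?_
  obtain ⟨hmono, hlim⟩ := hfμ [p]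
  simp only [List.mem_singleton, Set.iUnion_iUnion_eq_left] at hlim
  have hiff := lt_iff_exists_lt_of_monotone_of_tendsto (a := 0) (Rat.cast_mono.comp hmono) hlim
  simpa [ENNReal.toReal_pos_iff, measure_Ioo_lt_top] using hiff.symm

theorem nonempty_support_inter_iff_measure_pos {X : Type*} [TopologicalSpace X]
    [HereditarilyLindelofSpace X] [MeasurableSpace X] {μ : Measure X} {U : Set X} (hU : IsOpen U) :
    (μ.support ∩ U).Nonempty ↔ 0 < μ U := by
  rw [Set.inter_comm]
  exact ⟨fun ⟨x, hxU, hx⟩ => (Measure.mem_support_iff_forall x).1 hx U (hU.mem_nhds hxU),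
    Measure.nonempty_inter_support_of_pos⟩

theorem computableMeasure_support_contains_computable_point_general (μ : Measure ℝ) [NeZero μ]
    (hμ : REPred fun p : ℚ × ℚ => 0 < μ (Set.Ioo (p.1 : ℝ) p.2)) :
    ∃ x : ℝ, IsComputableReal x ∧ x ∈ μ.support := by
  obtain ⟨x, hxμ, hx⟩ := exists_isComputableReal_mem_of_rePred Measure.isClosed_support
    (Measure.nonempty_support (NeZero.ne μ))
    (hμ.of_eq fun _ => (nonempty_support_inter_iff_measure_pos isOpen_Ioo).symm)
  exact ⟨x, hx, hxμ⟩

end Measure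

/-- The support of a computable Borel probability measure on `ℝ` (the smallest closed
set of full measure) contains a computable point. -/
theorem computableMeasure_support_contains_computable_point
    (μ : Measure ℝ) [IsProbabilityMeasure μ] (hμ : IsComputableMeasureR μ) :
    ∃ x : ℝ, IsComputableReal x ∧
      ∀ C : Set ℝ, IsClosed C → μ C = 1 → x ∈ C := by
  obtain ⟨x, hx, hxμ⟩ := computableMeasure_support_contains_computable_point_general μ
    (rePred_measure_Ioo_pos hμ)
  exact ⟨x, hx, fun C hC hC1 => Measure.support_subset_of_isClosed hC
    (mem_ae_iff.2 ((prob_compl_eq_zero_iff hC.measurableSet).2 hC1)) hxμ⟩
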